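/- Let λ be a left-infinite word and ρ a right-infinite word over a finite alphabet A. If M is an upper bound for the set OG_{λ,ρ} = {og_{λ,ρ}(n) : n ∈ ℕ}, then 2M is an upper bound for the set ROG_{λ,ρ} = {rog_{λ,ρ}(n) : n ∈ ℕ}. -/

import Mathlib

/-- The suffix of length `n` of the left-infinite word `⋯ (lam 2)(lam 1)(lam 0)`. -/
def lSuffix {A : Type*} (lam : ℕ → A) (n : ℕ) : List A := (List.range n).reverse.map lam

/-- The prefix of length `n` of the right-infinite word `(rho 0)(rho 1)(rho 2) ⋯`. -/
def rPrefix {A : Type*} (rho : ℕ → A) (n : ℕ) : List A := (List.range n).map rho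

/-- The left overlap gap between two finite words. -/
noncomputable def logGap {A : Type*} (u v : List A) : ℕ :=
  sInf {n | ∃ x x' : List A, x.length = n ∧ x'.length = n ∧ u ++ x = x' ++ v}

/-- The right overlap gap between two finite words. -/
noncomputable def rogGap {A : Type*} (u v : List A) : ℕ :=
  sInf {n | ∃ x x' : List A, x.length = n ∧ x'.length = n ∧ x ++ u = v ++ x'}

/-- The overlap gap between two finite words. -/
noncomputable def ogGap {A : Type*} (u v : List A) : ℕ := min (logGap u v) (rogGap u v)

/-! Write `λ_{n+M} = wλ_n` and `ρ_{n+M} = ρ_n z` with `|w| = |z| = M`, and look at how these longer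
words overlap. A right overlap `x(wλ_n) = (ρ_n z)x'` is also the right overlap
`(xw)λ_n = ρ_n(zx')`, of gap `|x| + M`. In a left overlap `(wλ_n)x = x'(ρ_n z)` with `|x| ≤ M`,
the word `x'` is a prefix of `w` and `x` is a suffix of `z`; cancelling them leaves a right overlap
of `λ_n` and `ρ_n` of gap `M - |x|`. -/

section Words

variable {A : Type*} {u v w x x' z : List A}

theorem exists_append_eq_append_logGap (huv : u.length = v.length) :
    ∃ x x' : List A, x.length = logGap u v ∧ x'.length = logGap u v ∧ u ++ x = x' ++ v :=
  Nat.sInf_mem (s := {n | ∃ x x' : List A, x.length = n ∧ x'.length = n ∧ u ++ x = x' ++ v})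
    ⟨v.length, v, u, rfl, huv, rfl⟩

theorem exists_append_eq_append_rogGap (huv : u.length = v.length) :
    ∃ x x' : List A, x.length = rogGap u v ∧ x'.length = rogGap u v ∧ x ++ u = v ++ x' :=
  Nat.sInf_mem (s := {n | ∃ x x' : List A, x.length = n ∧ x'.length = n ∧ x ++ u = v ++ x'})
    ⟨v.length, v, u, rfl, huv, rfl⟩

theorem rogGap_le_length (huv : u.length = v.length) (h : x ++ u = v ++ x') :
    rogGap u v ≤ x.length := by
  have hlen : x.length + u.length = v.length + x'.length := by
    simpa only [List.length_append] using congrArg List.length h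
  exact Nat.sInf_le ⟨x, x', rfl, by omega, h⟩

theorem rogGap_le_rogGap_append_add_length (huv : u.length = v.length)
    (hwz : w.length = z.length) :
    rogGap u v ≤ rogGap (w ++ u) (v ++ z) + w.length := by
  have hlen : (w ++ u).length = (v ++ z).length := by
    simp only [List.length_append]
    omega
  obtain ⟨x, x', hx, -, h⟩ := exists_append_eq_append_rogGap hlen
  have h' : (x ++ w) ++ u = v ++ (z ++ x') := by simpa only [List.append_assoc] using h
  calc rogGap u v ≤ (x ++ w).length := rogGap_le_length huv h'
    _ = rogGap (w ++ u) (v ++ z) + w.length := by rw [List.length_append, hx]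

theorem rogGap_add_logGap_append_le_length (huv : u.length = v.length)
    (hwz : w.length = z.length) (hw : logGap (w ++ u) (v ++ z) ≤ w.length) :
    rogGap u v + logGap (w ++ u) (v ++ z) ≤ w.length := by
  have hlen : (w ++ u).length = (v ++ z).length := by
    simp only [List.length_append]
    omega
  obtain ⟨x, x', hx, hx', h⟩ := exists_append_eq_append_logGap hlen
  rw [← hx'] at hw ⊢
  obtain ⟨w', rfl⟩ : x' <+: w :=
    List.prefix_of_prefix_length_le ⟨_, h.symm⟩ ⟨u ++ x, (List.append_assoc ..).symm⟩ hw
  obtain ⟨z', rfl⟩ : x <:+ z :=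
    List.suffix_of_suffix_length_le ⟨_, h⟩ ⟨x' ++ v, List.append_assoc ..⟩ (by omega)
  have hmid : x' ++ (w' ++ u) ++ x = x' ++ (v ++ z') ++ x := by
    simpa only [List.append_assoc] using h
  have hcancel : w' ++ u = v ++ z' := List.append_cancel_left (List.append_cancel_right hmid)
  have hgap : rogGap u v ≤ w'.length := rogGap_le_length huv hcancel
  rw [List.length_append]
  omega

theorem rogGap_le_ogGap_append_add_length (huv : u.length = v.length)
    (hwz : w.length = z.length) (hw : ogGap (w ++ u) (v ++ z) ≤ w.length) :
    rogGap u v ≤ ogGap (w ++ u) (v ++ z) + w.length := by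
  rcases min_choice (logGap (w ++ u) (v ++ z)) (rogGap (w ++ u) (v ++ z)) with hlog | hrog
  · rw [ogGap, hlog] at hw ⊢
    have := rogGap_add_logGap_append_le_length huv hwz hw
    omega
  · rw [ogGap, hrog]
    exact rogGap_le_rogGap_append_add_length huv hwz

end Words

section InfiniteWords

variable {A : Type*}

@[simp]
theorem length_lSuffix (lam : ℕ → A) (n : ℕ) : (lSuffix lam n).length = n := by
  simp [lSuffix]

@[simp]
theorem length_rPrefix (rho : ℕ → A) (n : ℕ) : (rPrefix rho n).length = n := by
  simp [rPrefix]

theorem lSuffix_add (lam : ℕ → A) (n m : ℕ) :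
    lSuffix lam (n + m) = lSuffix (fun i ↦ lam (n + i)) m ++ lSuffix lam n := by
  simp [lSuffix, List.range_add, Function.comp_def]

theorem rPrefix_add (rho : ℕ → A) (n m : ℕ) :
    rPrefix rho (n + m) = rPrefix rho n ++ rPrefix (fun i ↦ rho (n + i)) m := by
  simp [rPrefix, List.range_add, Function.comp_def]

end InfiniteWords

theorem rog_le_two_mul_of_og_le_general {A : Type*} (lam rho : ℕ → A) (M n : ℕ)
    (hM : ogGap (lSuffix lam (n + M)) (rPrefix rho (n + M)) ≤ M) :
    rogGap (lSuffix lam n) (rPrefix rho n) ≤ 2 * M := by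
  rw [lSuffix_add, rPrefix_add] at hM
  have hgap := rogGap_le_ogGap_append_add_length (u := lSuffix lam n) (v := rPrefix rho n)
    (by simp) (by simp) (hM.trans_eq (length_lSuffix _ M).symm)
  rw [length_lSuffix] at hgap
  omega

/-- If `M` is an upper bound for `OG`, then `2M` is an upper bound for `ROG`. -/
theorem rog_le_two_mul_of_og_le {A : Type*} [Fintype A] [Nonempty A] (lam rho : ℕ → A)
    (M : ℕ) (hM : ∀ n, ogGap (lSuffix lam n) (rPrefix rho n) ≤ M) :
    ∀ n, rogGap (lSuffix lam n) (rPrefix rho n) ≤ 2 * M :=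
  fun n ↦ rog_le_two_mul_of_og_le_general lam rho M n (hM (n + M))
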